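/- arXiv:1705.07630 — 3 statements merged into one kernel-verified Lean document; each statement's English description precedes it below -/
import Mathlib

section
/- Let P be a finite poset with unique minimal element x₀ and let k be a field. The Krull dimension of the Hibi ring R_k(H) equals the cardinality of P. -/
open MvPolynomial

/-!
Every variable `X x` is a quotient of two elements of the Hibi ring, the products of the variables
over the lower sets `Iic x` and `Iio x`. Hence the polynomial ring is algebraic over the Hibi ring,
and both have transcendence degree `#P`. Noether normalization identifies the Krull dimension of a
finitely generated domain over a field with its transcendence degree.
-/

universe u v w

section IntegralExtension

variable (R S : Type*) [CommRing R] [CommRing S] [Algebra R S]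

theorem strictMono_primeSpectrum_comap_of_isIntegral [Algebra.IsIntegral R S] :
    StrictMono (PrimeSpectrum.comap (algebraMap R S)) :=
  fun _ _ h ↦ Ideal.IsIntegral.comap_lt_comap h

theorem ringKrullDim_le_of_isIntegral [Algebra.IsIntegral R S] :
    ringKrullDim S ≤ ringKrullDim R :=
  Order.krullDim_le_of_strictMono _ (strictMono_primeSpectrum_comap_of_isIntegral R S)

variable {R S} in
theorem ringKrullDim_le_of_hasGoingUp [Algebra.HasGoingUp R S]
    (hsurj : Function.Surjective (PrimeSpectrum.comap (algebraMap R S))) :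
    ringKrullDim R ≤ ringKrullDim S := by
  refine iSup_le fun l ↦ ?_
  obtain ⟨Q, hQ⟩ := hsurj l.head
  have : Q.asIdeal.LiesOver l.head.asIdeal := ⟨congrArg PrimeSpectrum.asIdeal hQ.symm⟩
  obtain ⟨L, hL, -⟩ := Ideal.exists_ltSeries_of_hasGoingUp l Q.asIdeal
  exact le_iSup_of_le L (by rw [hL])

theorem ringKrullDim_eq_of_isIntegral [Algebra.IsIntegral R S] [FaithfulSMul R S] :
    ringKrullDim S = ringKrullDim R :=
  le_antisymm (ringKrullDim_le_of_isIntegral R S)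
    (ringKrullDim_le_of_hasGoingUp (Algebra.IsIntegral.comap_surjective R S))

end IntegralExtension

theorem isAlgebraic_of_adjoin_eq_top {R S A : Type*} [CommSemiring R] [CommRing S] [IsDomain S]
    [CommRing A] [Algebra R S] [Algebra R A] [Algebra S A] [IsScalarTower R S A] {s : Set A}
    (hs : Algebra.adjoin R s = ⊤) (halg : ∀ a ∈ s, IsAlgebraic S a) :
    Algebra.IsAlgebraic S A where
  isAlgebraic a := by
    have hle : Algebra.adjoin R s ≤ (Subalgebra.algebraicClosure S A).restrictScalars R :=
      Algebra.adjoin_le halg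
    exact hle (hs ▸ Algebra.mem_top)

theorem lift_trdeg_eq_of_isAlgebraic (R : Type*) [CommRing R] [Nontrivial R]
    (S : Type v) (A : Type w) [CommRing S] [CommRing A] [NoZeroDivisors A]
    [Algebra R S] [Algebra S A] [Algebra R A]
    [IsScalarTower R S A] [FaithfulSMul R S] [FaithfulSMul S A] [Algebra.IsAlgebraic S A] :
    Cardinal.lift.{w} (Algebra.trdeg R S) = Cardinal.lift.{v} (Algebra.trdeg R A) := by
  rw [← lift_trdeg_add_eq R S A, trdeg_eq_zero (R := S), Cardinal.lift_zero, add_zero]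

theorem ringKrullDim_eq_toNat_trdeg (k A : Type*) [Field k] [CommRing A] [IsDomain A]
    [Algebra k A] [Algebra.FiniteType k A] :
    ringKrullDim A = (Cardinal.toNat (Algebra.trdeg k A) : ℕ) := by
  obtain ⟨n, g, hg, hint⟩ := exists_integral_inj_algHom_of_fg k A
  algebraize [g.toRingHom]
  have : Algebra.IsIntegral (MvPolynomial (Fin n) k) A := ⟨hint⟩
  have : FaithfulSMul (MvPolynomial (Fin n) k) A :=
    (faithfulSMul_iff_algebraMap_injective _ _).mpr hg
  have htrdeg : Algebra.trdeg k A = n := by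
    simpa using (lift_trdeg_eq_of_isAlgebraic k (MvPolynomial (Fin n) k) A).symm
  calc
    ringKrullDim A = ringKrullDim (MvPolynomial (Fin n) k) := ringKrullDim_eq_of_isIntegral _ _
    _ = n := by simp [MvPolynomial.ringKrullDim_of_isNoetherianRing]
    _ = (Cardinal.toNat (Algebra.trdeg k A) : ℕ) := by rw [htrdeg, Cardinal.toNat_natCast]

/-- The Hibi ring of `P` over `R`, as a subalgebra of the polynomial ring in variables indexed by
`P`. Poset ideals are encoded as finite lower sets, so the definition makes sense for infinite
`P`. -/
noncomputable def hibiRing (R P : Type*) [CommSemiring R] [LE P] :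
    Subalgebra R (MvPolynomial P R) :=
  Algebra.adjoin R
    {f : MvPolynomial P R | ∃ I : Finset P, I.Nonempty ∧ IsLowerSet (I : Set P) ∧
      f = ∏ x ∈ I, X x}

namespace hibiRing

theorem prod_X_mem (R : Type*) [CommSemiring R] {P : Type*} [LE P] {I : Finset P}
    (hI : IsLowerSet (I : Set P)) :
    ∏ x ∈ I, (X x : MvPolynomial P R) ∈ hibiRing R P := by
  obtain rfl | hne := I.eq_empty_or_nonempty
  · simp
  · exact Algebra.subset_adjoin ⟨I, hne, hI, rfl⟩

instance finiteType (R P : Type*) [CommSemiring R] [LE P] [Finite P] :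
    Algebra.FiniteType R (hibiRing R P) := by
  refine (Subalgebra.fg_iff_finiteType _).mp (Subalgebra.fg_def.mpr ⟨_, ?_, rfl⟩)
  refine (Set.finite_range fun I : Finset P ↦ ∏ x ∈ I, (X x : MvPolynomial P R)).subset ?_
  rintro _ ⟨I, -, -, rfl⟩
  exact ⟨I, rfl⟩

section LocallyFinite

variable (R : Type*) [CommRing R] [IsDomain R] {P : Type*} [PartialOrder P]
  [LocallyFiniteOrderBot P]

theorem isAlgebraic_X (x : P) : IsAlgebraic (hibiRing R P) (X x : MvPolynomial P R) := by
  have isAlgebraic_prod {I : Finset P} (hI : IsLowerSet (I : Set P)) :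
      IsAlgebraic (hibiRing R P) (∏ y ∈ I, X y : MvPolynomial P R) :=
    isAlgebraic_algebraMap (⟨_, prod_X_mem R hI⟩ : hibiRing R P)
  have hIio : IsLowerSet (Finset.Iio x : Set P) := by
    simpa only [Finset.coe_Iio] using isLowerSet_Iio x
  have hIic : IsLowerSet (Finset.Iic x : Set P) := by
    simpa only [Finset.coe_Iic] using isLowerSet_Iic x
  have hprod : ∏ y ∈ Finset.Iic x, (X y : MvPolynomial P R) =
      (∏ y ∈ Finset.Iio x, X y) * X x := by
    rw [Finset.Iic_eq_cons_Iio, Finset.prod_cons, mul_comm]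
  have hne : ∏ y ∈ Finset.Iio x, (X y : MvPolynomial P R) ≠ 0 :=
    Finset.prod_ne_zero_iff.mpr fun y _ ↦ X_ne_zero y
  exact (isAlgebraic_prod hIio).of_mul (mem_nonZeroDivisors_of_ne_zero hne)
    (hprod ▸ isAlgebraic_prod hIic)

variable (P)

instance isAlgebraic_mvPolynomial : Algebra.IsAlgebraic (hibiRing R P) (MvPolynomial P R) :=
  isAlgebraic_of_adjoin_eq_top adjoin_range_X (Set.forall_mem_range.mpr (isAlgebraic_X R))

end LocallyFinite

theorem trdeg_eq (R : Type u) (P : Type v) [CommRing R] [IsDomain R] [PartialOrder P]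
    [LocallyFiniteOrderBot P] :
    Algebra.trdeg R (hibiRing R P) = Cardinal.lift.{u} (Cardinal.mk P) := by
  rw [← MvPolynomial.trdeg_of_isDomain (S := R)]
  exact Cardinal.lift_injective (lift_trdeg_eq_of_isAlgebraic R _ _)

end hibiRing

theorem hibi_ring_krullDim_general (k P : Type*) [Field k] [Fintype P] [PartialOrder P] :
    ringKrullDim (hibiRing k P) = Fintype.card P := by
  classical
  have : LocallyFiniteOrderBot P := .ofIic P (fun x ↦ {y | y ≤ x}) (by simp)
  rw [ringKrullDim_eq_toNat_trdeg k, hibiRing.trdeg_eq, Cardinal.toNat_lift, Cardinal.mk_fintype,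
    Cardinal.toNat_natCast]

/-- the Krull dimension of the Hibi ring equals the cardinality of `P`. -/
theorem hibi_ring_krullDim
    {k : Type*} [Field k] {P : Type*} [Fintype P] [PartialOrder P]
    (x₀ : P) (hx₀ : ∀ x : P, x₀ ≤ x)
    (H : Subalgebra k (MvPolynomial P k))
    (hH : H = Algebra.adjoin k
      {f : MvPolynomial P k | ∃ I : Finset P, I.Nonempty ∧ IsLowerSet (I : Set P) ∧
        f = ∏ x ∈ I, X x}) :
    ringKrullDim H = Fintype.card P := by
  subst hH
  exact hibi_ring_krullDim_general k P
end

section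
/- Let P be a finite poset with unique minimal element x₀, r = rank P⁺, and r_max the maximum of r(y₁,x₁,…,y_t,x_t) over all sequences satisfying condition N. Then for an integer i there exists a minimal element ν of the poset (T(P), ≤) with ν(x₀) = i if and only if r ≤ i ≤ r_max. -/
/-- The rank of the interval `[x,y]`: the maximum length of a chain from `x` to `y`. -/
noncomputable def intervalRank {Q : Type*} [PartialOrder Q] (x y : Q) : ℕ :=
  sSup {n : ℕ | ∃ c : Fin (n + 1) → Q, StrictMono c ∧ c 0 = x ∧ c (Fin.last n) = y}

/-- `ν ∈ T(P)`: here `Q` plays the role of `P⁺`, with `⊤ = ∞`. -/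
def IsTP {Q : Type*} [PartialOrder Q] [OrderTop Q] (ν : Q → ℕ) : Prop :=
  ν ⊤ = 0 ∧ StrictAnti ν

/-- The order on `T(P)`: `μ ≤ ν` iff `ν - μ ∈ \overline{T}(P)`, i.e. `ν - μ` is
nonnegative and order-reversing. -/
def LeTP {Q : Type*} [PartialOrder Q] (μ ν : Q → ℕ) : Prop :=
  (∀ a : Q, μ a ≤ ν a) ∧
  (∀ a b : Q, a ≤ b → (ν b : ℤ) - (μ b : ℤ) ≤ (ν a : ℤ) - (μ a : ℤ))

/-- `ν` is a minimal element of the poset `(T(P), ≤)`. -/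
def IsMinTP {Q : Type*} [PartialOrder Q] [OrderTop Q] (ν : Q → ℕ) : Prop :=
  IsTP ν ∧ ∀ μ : Q → ℕ, IsTP μ → LeTP μ ν → μ = ν

/-- Condition N (elements of the sequence lie in `P = Q ∖ {⊤}`, `x₀ = ⊥`). -/
def CondN {Q : Type*} [PartialOrder Q] [OrderBot Q] (t : ℕ) (y x : Fin t → Q) : Prop :=
  (∀ h : 0 < t, x ⟨0, h⟩ ≠ ⊥) ∧
  (∀ i : Fin t, x i < y i) ∧
  (∀ (i : ℕ) (h₁ : i < t) (h₂ : i + 1 < t), x ⟨i, h₁⟩ < y ⟨i + 1, h₂⟩) ∧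
  (∀ i j : Fin t, i < j → ¬ x j ≤ y i)

/-- `x_0 = x₀, x_1, …, x_t`: the sequence of `x`'s prefixed with the minimum. -/
def seqX {Q : Type*} (x₀ : Q) {t : ℕ} (x : Fin t → Q) : Fin (t + 1) → Q :=
  Fin.cons x₀ x

/-- `y_1, …, y_t, y_{t+1} = ∞`: the sequence of `y`'s suffixed with `∞`. -/
def seqY {Q : Type*} (inf : Q) {t : ℕ} (y : Fin t → Q) : Fin (t + 1) → Q :=
  Fin.snoc y inf

/-- The integer `r(y₁,x₁,…,y_t,x_t)` attached to a sequence with condition N. -/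
noncomputable def rSeq {Q : Type*} [PartialOrder Q] [BoundedOrder Q] (t : ℕ)
    (y x : Fin t → Q) : ℤ :=
  (∑ i : Fin t,
    ((intervalRank (seqX (⊥ : Q) x i.castSucc) (y i) : ℤ) -
      (intervalRank (x i) (y i) : ℤ))) +
  (intervalRank (seqX (⊥ : Q) x (Fin.last t)) (⊤ : Q) : ℤ)

/-!
A pair `x ≤ y` is tight for `ν ∈ T(P)` if `ν x - ν y` is the rank of `[x, y]`, its least possible
value.

Upper bound: if `ν` is minimal, every element lies above one that is joined to `∞` by tight ascents
alternating with descents, since otherwise `ν` could be lowered by one on the elements that do not.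
A shortest such path from `x₀` satisfies condition N, and adding up the values of `ν` along it gives
`ν(x₀) ≤ r(y₁, …, x_t)`.

Lower bound: condition N (iii) allows one to build `f ∈ T(P)` for which all pairs `x_i < y_i` are
tight. If `μ ≤ f` in `T(P)`, then `f - μ` is order-reversing, so `μ` drops from `x_i` to `y_i` by at
most `rank [x_i, y_i]`; hence `r(y₁, …, x_t) ≤ μ(x₀)`, in particular for a minimal `μ` below `f`.

Intermediate values: if `ν` is minimal, so is the maximum of `ν - k` and `z ↦ rank [z, ∞]`.
-/

section IntervalRank

variable {Q : Type*} [PartialOrder Q]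

theorem finiteDimensionalOrder_of_finite {α : Type*} [Preorder α] [Finite α] [Nonempty α] :
    FiniteDimensionalOrder α := by
  have := Fintype.ofFinite α
  refine not_infiniteDimensionalOrder_iff.1 fun _ => ?_
  have hlt := (LTSeries.withLength α (Fintype.card α)).length_lt_card
  exact hlt.ne (LTSeries.length_withLength α _)

theorem bddAbove_chainLengths [FiniteDimensionalOrder Q] (x y : Q) :
    BddAbove {n : ℕ | ∃ c : Fin (n + 1) → Q, StrictMono c ∧ c 0 = x ∧ c (Fin.last n) = y} := by
  refine ⟨(LTSeries.longestOf Q).length, ?_⟩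
  rintro n ⟨c, hc, -, -⟩
  exact LTSeries.longestOf_is_longest (LTSeries.mk n c hc)

theorem length_le_intervalRank [FiniteDimensionalOrder Q] (p : LTSeries Q) :
    p.length ≤ intervalRank p.head p.last :=
  le_csSup (bddAbove_chainLengths _ _) ⟨p.toFun, p.strictMono, rfl, rfl⟩

theorem exists_ltSeries_length_eq_intervalRank [FiniteDimensionalOrder Q] {x y : Q} (h : x ≤ y) :
    ∃ p : LTSeries Q, p.head = x ∧ p.last = y ∧ p.length = intervalRank x y := by
  have hne : {n : ℕ | ∃ c : Fin (n + 1) → Q,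
      StrictMono c ∧ c 0 = x ∧ c (Fin.last n) = y}.Nonempty := by
    rcases h.eq_or_lt with rfl | h
    · exact ⟨0, ![x], by simp, rfl, rfl⟩
    · exact ⟨1, ![x, y], by simp [h], rfl, rfl⟩
  obtain ⟨c, hc, hhead, hlast⟩ := Nat.sSup_mem hne (bddAbove_chainLengths x y)
  exact ⟨LTSeries.mk _ c hc, hhead, hlast, rfl⟩

theorem intervalRank_add_le [FiniteDimensionalOrder Q] {x y z : Q} (hxy : x ≤ y) (hyz : y ≤ z) :
    intervalRank x y + intervalRank y z ≤ intervalRank x z := by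
  obtain ⟨p, rfl, hpy, hp⟩ := exists_ltSeries_length_eq_intervalRank hxy
  obtain ⟨q, hqy, rfl, hq⟩ := exists_ltSeries_length_eq_intervalRank hyz
  simpa only [RelSeries.smash_length, RelSeries.head_smash, RelSeries.last_smash, hp, hq] using
    length_le_intervalRank (p.smash q (hpy.trans hqy.symm))

theorem one_le_intervalRank [FiniteDimensionalOrder Q] {x y : Q} (h : x < y) :
    1 ≤ intervalRank x y :=
  le_csSup (bddAbove_chainLengths x y) ⟨![x, y], by simp [h], rfl, rfl⟩

theorem intervalRank_lt_of_lt_of_le [FiniteDimensionalOrder Q] {x y z : Q} (hxy : x < y)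
    (hyz : y ≤ z) : intervalRank y z < intervalRank x z := by
  have hadd := intervalRank_add_le hxy.le hyz
  have hone := one_le_intervalRank hxy
  omega

@[simp]
theorem intervalRank_self [FiniteDimensionalOrder Q] (x : Q) : intervalRank x x = 0 := by
  have hadd := intervalRank_add_le (le_refl x) (le_refl x)
  omega

theorem add_intervalRank_le_of_strictAnti {ν : Q → ℕ} (hν : StrictAnti ν) {x y : Q} (h : x ≤ y) :
    ν y + intervalRank x y ≤ ν x := by
  have hanti := hν.antitone h
  suffices intervalRank x y ≤ ν x - ν y by omega
  refine csSup_le' ?_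
  rintro n ⟨c, hc, rfl, rfl⟩
  have hmono : StrictMono fun z => -(ν z : ℤ) := fun a b hab => by
    have := hν hab
    dsimp only
    omega
  have hdrop : -(ν (c 0) : ℤ) + n ≤ -(ν (c (Fin.last n)) : ℤ) :=
    ((LTSeries.mk n c hc).map _ hmono).head_add_length_le_int
  omega

end IntervalRank

section MinimalElements

variable {Q : Type*} [PartialOrder Q]

theorem isTP_intervalRank_top [OrderTop Q] [FiniteDimensionalOrder Q] :
    IsTP fun z : Q => intervalRank z ⊤ :=
  ⟨intervalRank_self _, fun _ _ hab => intervalRank_lt_of_lt_of_le hab le_top⟩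

theorem LeTP.refl (ν : Q → ℕ) : LeTP ν ν :=
  ⟨fun _ => le_rfl, fun _ _ _ => by omega⟩

theorem LeTP.trans {κ μ ν : Q → ℕ} (hκμ : LeTP κ μ) (hμν : LeTP μ ν) : LeTP κ ν := by
  refine ⟨fun a => (hκμ.1 a).trans (hμν.1 a), fun a b hab => ?_⟩
  have hle := add_le_add (hκμ.2 a b hab) (hμν.2 a b hab)
  omega

theorem LeTP.eq_of_bot_le [OrderBot Q] {μ ν : Q → ℕ} (h : LeTP μ ν) (hbot : ν ⊥ ≤ μ ⊥) :
    μ = ν := by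
  funext z
  have hle := h.1 z
  have hdiff := h.2 ⊥ z bot_le
  omega

theorem IsTP.exists_isMinTP_leTP [BoundedOrder Q] {f : Q → ℕ} (hf : IsTP f) :
    ∃ ν, IsMinTP ν ∧ LeTP ν f := by
  obtain ⟨ν, ⟨hν, hνf⟩, hmin⟩ := exists_minimalFor_of_wellFoundedLT
    (fun μ : Q → ℕ => IsTP μ ∧ LeTP μ f) (fun μ => μ ⊥) ⟨f, hf, LeTP.refl f⟩
  exact ⟨ν, ⟨hν, fun μ hμ hμν => hμν.eq_of_bot_le (hmin ⟨hμ, hμν.trans hνf⟩ (hμν.1 ⊥))⟩, hνf⟩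

theorem IsMinTP.eq_empty_of_isLowerSet [OrderTop Q] {ν : Q → ℕ} (hν : IsMinTP ν) {S : Set Q}
    (hS : IsLowerSet S) (htop : ⊤ ∉ S)
    (hdrop : ∀ x y, x < y → x ∈ S → y ∉ S → ν y + 2 ≤ ν x) : S = ∅ := by
  classical
  have hpos : ∀ x ∈ S, 1 ≤ ν x := fun x hx => by
    have := hν.1.2 (lt_top_iff_ne_top.2 (ne_of_mem_of_not_mem hx htop))
    omega
  set e : Q → ℕ := fun x => if x ∈ S then 1 else 0 with he
  have he_top : e ⊤ = 0 := if_neg htop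
  have he_le : ∀ x, e x ≤ ν x := by grind
  have he_anti : ∀ x y, x ≤ y → e y ≤ e x := by grind [IsLowerSet]
  have he_drop : ∀ x y, x < y → ν y + e x < ν x + e y := fun x y hxy => by
    have hlt := hν.1.2 hxy
    grind [IsLowerSet]
  have hTP : IsTP fun x => ν x - e x := by
    refine ⟨by simp [he_top, hν.1.1], fun x y hxy => ?_⟩
    have hdrop := he_drop x y hxy
    have hle := he_le y
    dsimp only
    omega
  have hle : LeTP (fun x => ν x - e x) ν := by
    refine ⟨fun x => Nat.sub_le _ _, fun x y hxy => ?_⟩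
    have hanti := he_anti x y hxy
    have hx := he_le x
    have hy := he_le y
    dsimp only
    omega
  refine Set.eq_empty_iff_forall_notMem.2 fun z hz => ?_
  have heq := congrFun (hν.2 _ hTP hle) z
  have hz_pos := hpos z hz
  simp only [he, hz, if_true] at heq
  omega

theorem IsMinTP.max_intervalRank_sub [OrderTop Q] [FiniteDimensionalOrder Q] {ν : Q → ℕ}
    (hν : IsMinTP ν) (k : ℕ) : IsMinTP fun z => max (intervalRank z ⊤) (ν z - k) := by
  refine ⟨⟨by simp [hν.1.1], fun x y hxy => ?_⟩, fun μ hμ hle => ?_⟩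
  · have hrank := intervalRank_lt_of_lt_of_le hxy le_top
    have hlt := hν.1.2 hxy
    dsimp only
    omega
  have hrank : ∀ x, intervalRank x ⊤ ≤ μ x := fun x => by
    have hdrop := add_intervalRank_le_of_strictAnti hμ.2 (le_top (a := x))
    omega
  have hempty : {z | μ z < max (intervalRank z ⊤) (ν z - k)} = ∅ := by
    refine hν.eq_empty_of_isLowerSet (fun y x hxy hy => ?_) (by simp [hν.1.1])
      fun x y hxy hx hy => ?_
    · have hdiff := hle.2 x y hxy
      dsimp only at hdiff
      rw [Set.mem_ofPred_eq] at hy ⊢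
      omega
    · have hlt := hμ.2 hxy
      have hx_rank := hrank x
      rw [Set.mem_ofPred_eq] at hx hy
      omega
  exact funext fun z => (hle.1 z).antisymm (not_lt.1 (Set.eq_empty_iff_forall_notMem.1 hempty z))

end MinimalElements

section Zigzag

variable {Q : Type*} [PartialOrder Q] {t : ℕ}

/-- The zigzags `a ≤ y₁ > x₁ ≤ y₂ > x₂ ≤ ⋯ ≤ y_t > x_t` in `P` with (iii) of condition N. Letting
the starting point `a` vary makes the notion inductive: removing `y₁, x₁` leaves a zigzag from `x₁`.
The inequalities `x_i < y_{i+1}` of condition N are consequences. -/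
structure IsZigzag [OrderTop Q] (a : Q) (y x : Fin t → Q) : Prop where
  ne_top : ∀ i, y i ≠ ⊤
  lt : ∀ i, x i < y i
  le : ∀ i : Fin t, seqX a x i.castSucc ≤ y i
  not_le : ∀ i j, i < j → ¬ x j ≤ y i

/-- The integer `r(y₁,x₁,…,y_t,x_t)` with `x₀` replaced by an arbitrary starting point `a`. -/
noncomputable def zigzagRank [OrderTop Q] (a : Q) (y x : Fin t → Q) : ℤ :=
  (∑ i : Fin t,
    ((intervalRank (seqX a x i.castSucc) (y i) : ℤ) - (intervalRank (x i) (y i) : ℤ))) +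
  (intervalRank (seqX a x (Fin.last t)) (⊤ : Q) : ℤ)

/-- The integers `r(y₁,x₁,…,y_t,x_t)` for the sequences in `P` with condition N; their maximum is
`r_max`. -/
def condNRanks (Q : Type*) [PartialOrder Q] [BoundedOrder Q] : Set ℤ :=
  {v : ℤ | ∃ (t : ℕ) (y x : Fin t → Q),
    (∀ i, y i ≠ ⊤) ∧ (∀ i, x i ≠ ⊤) ∧ CondN t y x ∧ v = rSeq t y x}

theorem seqX_tail {α : Type*} (x : Fin (t + 1) → α) : seqX (x 0) (Fin.tail x) = x :=
  Fin.cons_self_tail x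

theorem seqX_succ {α : Type*} (a : α) (x : Fin t → α) (i : Fin t) : seqX a x i.succ = x i :=
  Fin.cons_succ ..

theorem zigzagRank_zero [OrderTop Q] (a : Q) (y x : Fin 0 → Q) :
    zigzagRank a y x = intervalRank a ⊤ := by
  simp [zigzagRank, seqX]

theorem zigzagRank_succ [OrderTop Q] (a : Q) (y x : Fin (t + 1) → Q) :
    zigzagRank a y x = intervalRank a (y 0) - intervalRank (x 0) (y 0) +
      zigzagRank (x 0) (Fin.tail y) (Fin.tail x) := by
  have hhead : seqX a x (Fin.castSucc 0) = a := rfl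
  simp only [zigzagRank, Fin.sum_univ_succ, hhead, seqX_tail, ← Fin.succ_castSucc, ← Fin.succ_last,
    seqX_succ, Fin.tail, add_assoc]

namespace IsZigzag

theorem tail [OrderTop Q] {a : Q} {y x : Fin (t + 1) → Q} (h : IsZigzag a y x) :
    IsZigzag (x 0) (Fin.tail y) (Fin.tail x) where
  ne_top i := h.ne_top i.succ
  lt i := h.lt i.succ
  le i := by
    have hle := h.le i.succ
    rwa [← Fin.succ_castSucc, seqX_succ, ← seqX_tail x] at hle
  not_le i j hij := h.not_le i.succ j.succ (Fin.succ_lt_succ_iff.2 hij)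

theorem cons [OrderTop Q] {a b c : Q} {y x : Fin t → Q} (h : IsZigzag c y x) (hb : b ≠ ⊤)
    (hab : a ≤ b) (hcb : c < b) (hxb : ∀ i, ¬ x i ≤ b) :
    IsZigzag a (Fin.cons b y : Fin (t + 1) → Q) (Fin.cons c x) where
  ne_top := Fin.cases hb h.ne_top
  lt := Fin.cases hcb h.lt
  le := Fin.cases hab h.le
  not_le := Fin.cases (Fin.cases (fun hij => absurd hij (lt_irrefl _)) fun j _ => hxb j)
    fun i => Fin.cases (fun hij => absurd hij (Fin.not_lt_zero _))
      fun j hij => h.not_le i j (Fin.succ_lt_succ_iff.1 hij)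

theorem condN [BoundedOrder Q] {a : Q} {y x : Fin t → Q} (h : IsZigzag a y x)
    (hx : ∀ i, x i ≠ ⊥) : CondN t y x := by
  refine ⟨fun _ => hx _, h.lt, fun i hi hi' => ?_, h.not_le⟩
  have hle : x ⟨i, hi⟩ ≤ y ⟨i + 1, hi'⟩ := h.le ⟨i + 1, hi'⟩
  refine hle.lt_of_ne fun heq => h.not_le ⟨i, hi⟩ ⟨i + 1, hi'⟩ (Nat.lt_succ_self i) ?_
  exact (h.lt ⟨i + 1, hi'⟩).le.trans (heq.symm.le.trans (h.lt ⟨i, hi⟩).le)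

theorem zigzagRank_mem_condNRanks [BoundedOrder Q] {y x : Fin t → Q} (h : IsZigzag ⊥ y x)
    (hx : ∀ i, x i ≠ ⊥) : zigzagRank ⊥ y x ∈ condNRanks Q :=
  ⟨t, y, x, h.ne_top, fun i => (h.lt i).ne_top, h.condN hx, rfl⟩

end IsZigzag

theorem CondN.isZigzag [BoundedOrder Q] {y x : Fin t → Q} (h : CondN t y x) (hy : ∀ i, y i ≠ ⊤) :
    IsZigzag ⊥ y x where
  ne_top := hy
  lt := h.2.1
  le := by
    obtain ⟨-, -, hstep, -⟩ := h
    cases t with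
    | zero => exact fun i => i.elim0
    | succ t => exact Fin.cases bot_le fun i => (hstep i (by omega) (by omega)).le
  not_le := h.2.2.2

end Zigzag

section LowerBound

variable {Q : Type*} [PartialOrder Q] {t : ℕ} {ν : Q → ℕ}

/-- The drop of `ν` from `x` to `y` is the rank of `[x, y]`, the least possible drop for an element
of `T(P)`. -/
def IsTight (ν : Q → ℕ) (x y : Q) : Prop :=
  x ≤ y ∧ ν x = ν y + intervalRank x y

open Classical in
/-- The function `ν ∈ T(P)` modified below `b ≠ ⊤` so that every pair `z ≤ b` becomes tight; the
offset `ν ⊥` is large enough for the result to stay in `T(P)`. -/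
noncomputable def raiseBelow [OrderBot Q] (ν : Q → ℕ) (b z : Q) : ℕ :=
  if z ≤ b then ν ⊥ + intervalRank z b else ν z

theorem raiseBelow_of_le [OrderBot Q] {b z : Q} (h : z ≤ b) :
    raiseBelow ν b z = ν ⊥ + intervalRank z b :=
  if_pos h

theorem raiseBelow_of_not_le [OrderBot Q] {b z : Q} (h : ¬ z ≤ b) : raiseBelow ν b z = ν z :=
  if_neg h

theorem IsTP.raiseBelow [BoundedOrder Q] [FiniteDimensionalOrder Q] (hν : IsTP ν) {b : Q}
    (hb : b ≠ ⊤) : IsTP (raiseBelow ν b) := by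
  refine ⟨(raiseBelow_of_not_le (by simpa using hb)).trans hν.1, fun z w hzw => ?_⟩
  by_cases hw : w ≤ b
  · rw [raiseBelow_of_le hw, raiseBelow_of_le (hzw.le.trans hw)]
    exact Nat.add_lt_add_left (intervalRank_lt_of_lt_of_le hzw hw) _
  rw [raiseBelow_of_not_le hw]
  by_cases hz : z ≤ b
  · rw [raiseBelow_of_le hz]
    exact (hν.2 (bot_le.trans_lt hzw)).trans_le (Nat.le_add_right _ _)
  · rw [raiseBelow_of_not_le hz]
    exact hν.2 hzw

theorem isTight_raiseBelow_self [OrderBot Q] [FiniteDimensionalOrder Q] {b z : Q} (h : z ≤ b) :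
    IsTight (raiseBelow ν b) z b :=
  ⟨h, by rw [raiseBelow_of_le h, raiseBelow_of_le le_rfl, intervalRank_self, add_zero]⟩

theorem IsTight.raiseBelow [OrderBot Q] {b z w : Q} (h : IsTight ν z w) (hz : ¬ z ≤ b) :
    IsTight (raiseBelow ν b) z w := by
  refine ⟨h.1, ?_⟩
  rw [raiseBelow_of_not_le hz, raiseBelow_of_not_le fun hw => hz (h.1.trans hw)]
  exact h.2

theorem IsTight.le_of_leTP {μ : Q → ℕ} {x y : Q} (h : IsTight ν x y) (hμ : LeTP μ ν) :
    μ x ≤ μ y + intervalRank x y := by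
  have hdiff := hμ.2 x y h.1
  have heq := h.2
  omega

namespace IsZigzag

theorem exists_isTP_isTight [BoundedOrder Q] [FiniteDimensionalOrder Q] {a : Q} {y x : Fin t → Q}
    (h : IsZigzag a y x) : ∃ f : Q → ℕ, IsTP f ∧ ∀ i, IsTight f (x i) (y i) := by
  induction t generalizing a with
  | zero => exact ⟨_, isTP_intervalRank_top, fun i => i.elim0⟩
  | succ t ih =>
    obtain ⟨f, hf, htight⟩ := ih h.tail
    refine ⟨raiseBelow f (y 0), hf.raiseBelow (h.ne_top 0), Fin.cases ?_ fun i => ?_⟩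
    · exact isTight_raiseBelow_self (h.lt 0).le
    · exact (htight i).raiseBelow (h.not_le 0 i.succ i.succ_pos)

theorem zigzagRank_le [OrderTop Q] {μ : Q → ℕ} (hμ : StrictAnti μ) {a : Q} {y x : Fin t → Q}
    (h : IsZigzag a y x) (hdrop : ∀ i, μ (x i) ≤ μ (y i) + intervalRank (x i) (y i)) :
    zigzagRank a y x ≤ μ a := by
  induction t generalizing a with
  | zero =>
    have hrank := add_intervalRank_le_of_strictAnti hμ (le_top (a := a))
    rw [zigzagRank_zero]
    omega
  | succ t ih =>
    have htail := ih h.tail fun i => hdrop i.succ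
    have hdown := hdrop 0
    have hup : μ (y 0) + intervalRank a (y 0) ≤ μ a :=
      add_intervalRank_le_of_strictAnti hμ (h.le 0)
    rw [zigzagRank_succ]
    omega

theorem exists_isMinTP [BoundedOrder Q] [FiniteDimensionalOrder Q] {a : Q} {y x : Fin t → Q}
    (h : IsZigzag a y x) : ∃ ν : Q → ℕ, IsMinTP ν ∧ zigzagRank a y x ≤ ν a := by
  obtain ⟨f, hf, htight⟩ := h.exists_isTP_isTight
  obtain ⟨ν, hν, hνf⟩ := hf.exists_isMinTP_leTP
  exact ⟨ν, hν, h.zigzagRank_le hν.1.2 fun i => (htight i).le_of_leTP hνf⟩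

end IsZigzag

end LowerBound

section UpperBound

variable {Q : Type*} [PartialOrder Q] {ν : Q → ℕ}

theorem IsTight.trans [FiniteDimensionalOrder Q] (hν : StrictAnti ν) {x y z : Q}
    (hxy : IsTight ν x y) (hyz : IsTight ν y z) : IsTight ν x z := by
  refine ⟨hxy.1.trans hyz.1, ?_⟩
  have hdrop := add_intervalRank_le_of_strictAnti hν (hxy.1.trans hyz.1)
  have hadd := intervalRank_add_le hxy.1 hyz.1
  have heq := hxy.2
  have heq' := hyz.2
  omega

/-- The elements from which `⊤` is reached by `k` rounds of a tight ascent and a descent, followed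
by a tight ascent. -/
def tightLayer [OrderTop Q] (ν : Q → ℕ) : ℕ → Set Q
  | 0 => {a | IsTight ν a ⊤}
  | k + 1 => {a | ∃ b, IsTight ν a b ∧ ∃ c ≤ b, c ∈ tightLayer ν k}

theorem IsTight.mem_tightLayer [OrderTop Q] [FiniteDimensionalOrder Q] (hν : StrictAnti ν) {k : ℕ}
    {a b : Q} (hab : IsTight ν a b) (hb : b ∈ tightLayer ν k) : a ∈ tightLayer ν k := by
  cases k with
  | zero => exact hab.trans hν hb
  | succ k =>
    obtain ⟨b', hbb', hc⟩ := hb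
    exact ⟨b', hab.trans hν hbb', hc⟩

theorem IsMinTP.exists_le_mem_tightLayer [OrderTop Q] [FiniteDimensionalOrder Q] (hν : IsMinTP ν)
    (z : Q) : ∃ k, ∃ a ≤ z, a ∈ tightLayer ν k := by
  have htop : (⊤ : Q) ∈ tightLayer ν 0 := ⟨le_rfl, by simp⟩
  have hempty : {z | ¬ ∃ k, ∃ a ≤ z, a ∈ tightLayer ν k} = ∅ := by
    refine hν.eq_empty_of_isLowerSet (fun w z hzw hw => ?_) (fun h => h ⟨0, ⊤, le_rfl, htop⟩)
      fun z w hzw hz hw => ?_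
    · exact fun ⟨k, a, haz, ha⟩ => hw ⟨k, a, haz.trans hzw, ha⟩
    · obtain ⟨k, a, haw, ha⟩ := not_not.1 hw
      by_contra! hlt
      have hdrop := add_intervalRank_le_of_strictAnti hν.1.2 hzw.le
      have hone := one_le_intervalRank hzw
      have htight : IsTight ν z w := ⟨hzw.le, by omega⟩
      exact hz ⟨k + 1, z, le_rfl, w, htight, a, haw, ha⟩
  exact not_not.1 (Set.eq_empty_iff_forall_notMem.1 hempty z)

theorem IsTP.exists_isZigzag [OrderTop Q] [FiniteDimensionalOrder Q] (hν : IsTP ν) (t : ℕ) (a : Q)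
    (ha : a ∈ tightLayer ν t) (hmin : ∀ s < t, a ∉ tightLayer ν s) :
    ∃ y x : Fin t → Q, IsZigzag a y x ∧ (∀ i, ∃ s < t, x i ∈ tightLayer ν s) ∧
      ν a ≤ zigzagRank a y x := by
  induction t generalizing a with
  | zero =>
    refine ⟨Fin.elim0, Fin.elim0, ⟨fun i => i.elim0, fun i => i.elim0, fun i => i.elim0,
      fun i => i.elim0⟩, fun i => i.elim0, ?_⟩
    have hrank : ν a = ν ⊤ + intervalRank a ⊤ := ha.2
    rw [zigzagRank_zero, hrank, hν.1, zero_add]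
  | succ t ih =>
    obtain ⟨b, hab, c, hcb, hc⟩ := ha
    have hnot_le : ∀ s < t, ∀ z ∈ tightLayer ν s, ¬ z ≤ b := fun s hs z hz hzb =>
      hmin (s + 1) (by omega) ⟨b, hab, z, hzb, hz⟩
    obtain ⟨y, x, hzigzag, hx, hle⟩ := ih c hc fun s hs hcs => hnot_le s hs c hcs hcb
    have hcb' : c < b := hcb.lt_of_ne fun h =>
      hmin t t.lt_succ_self (hab.mem_tightLayer hν.2 (h ▸ hc))
    have hb : b ≠ ⊤ := by
      rintro rfl
      exact hmin 0 t.succ_pos hab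
    have hxb : ∀ i, ¬ x i ≤ b := fun i =>
      let ⟨s, hs, hxs⟩ := hx i
      hnot_le s hs _ hxs
    refine ⟨Fin.cons b y, Fin.cons c x, hzigzag.cons hb hab.1 hcb' hxb, fun i => ?_, ?_⟩
    · refine Fin.cases ⟨t, t.lt_succ_self, hc⟩ (fun i => ?_) i
      exact (hx i).imp fun _ => And.imp_left (Nat.lt_succ_of_lt ·)
    · have hup := hab.2
      have hdown := add_intervalRank_le_of_strictAnti hν.2 hcb
      rw [zigzagRank_succ, Fin.tail_cons, Fin.tail_cons, Fin.cons_zero, Fin.cons_zero]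
      omega

theorem IsMinTP.exists_mem_condNRanks_le [BoundedOrder Q] [FiniteDimensionalOrder Q]
    (hν : IsMinTP ν) : ∃ v ∈ condNRanks Q, (ν ⊥ : ℤ) ≤ v := by
  classical
  have hex : ∃ k, ⊥ ∈ tightLayer ν k := by
    simpa only [le_bot_iff, exists_eq_left] using hν.exists_le_mem_tightLayer ⊥
  have hmin : ∀ s < Nat.find hex, ⊥ ∉ tightLayer ν s := fun _ => Nat.find_min hex
  obtain ⟨y, x, hzigzag, hx, hle⟩ := hν.1.exists_isZigzag _ ⊥ (Nat.find_spec hex) hmin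
  refine ⟨_, hzigzag.zigzagRank_mem_condNRanks fun i hi => ?_, hle⟩
  obtain ⟨s, hs, hxs⟩ := hx i
  exact hmin s hs (hi ▸ hxs)

end UpperBound

theorem minimal_TP_degrees_general {Q : Type*} [PartialOrder Q] [BoundedOrder Q]
    [FiniteDimensionalOrder Q] (i : ℤ) :
    (∃ ν : Q → ℕ, IsMinTP ν ∧ (ν (⊥ : Q) : ℤ) = i) ↔
      (intervalRank (⊥ : Q) (⊤ : Q) : ℤ) ≤ i ∧ ∃ v ∈ condNRanks Q, i ≤ v := by
  constructor
  · rintro ⟨ν, hν, rfl⟩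
    have hrank := add_intervalRank_le_of_strictAnti hν.1.2 (bot_le (a := (⊤ : Q)))
    exact ⟨by omega, hν.exists_mem_condNRanks_le⟩
  · rintro ⟨hr, _, ⟨t, y, x, hy, -, hN, rfl⟩, hi⟩
    obtain ⟨ν, hν, hle⟩ := (hN.isZigzag hy).exists_isMinTP
    have hi' : i ≤ ν ⊥ := hi.trans hle
    exact ⟨_, hν.max_intervalRank_sub (ν ⊥ - i.toNat), by omega⟩

/-- with `r = rank P⁺` and `rmax` the maximum of `r(y₁,…,x_t)` over
sequences with condition N, there is a minimal element `ν` of `T(P)` with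
`ν(x₀) = i` if and only if `r ≤ i ≤ rmax`. -/
theorem minimal_TP_degrees
    {Q : Type*} [Fintype Q] [PartialOrder Q] [BoundedOrder Q]
    (rmax : ℤ)
    (hrmax : IsGreatest
      {v : ℤ | ∃ (t : ℕ) (y x : Fin t → Q),
        (∀ i, y i ≠ ⊤) ∧ (∀ i, x i ≠ ⊤) ∧ CondN t y x ∧ v = rSeq t y x} rmax) :
    ∀ i : ℤ,
      (∃ ν : Q → ℕ, IsMinTP ν ∧ (ν (⊥ : Q) : ℤ) = i) ↔
        ((intervalRank (⊥ : Q) (⊤ : Q) : ℤ) ≤ i ∧ i ≤ rmax) := by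
  have := finiteDimensionalOrder_of_finite (α := Q)
  exact fun i => (minimal_TP_degrees_general i).trans <| and_congr_right' <|
    ⟨fun ⟨_, hv, hi⟩ => hi.trans (hrmax.2 hv), fun hi => ⟨rmax, hrmax.1, hi⟩⟩
end

section
/- Let P⁺ be a poset of type (a) with parameters m ≥ 3 and n, n′ ≥ 0, and set P = P⁺ ∖ {∞}. For 1 ≤ h ≤ m−1 define ν_h : P⁺ → ℕ by ν_h(x) = rank[x,∞] if x ∈ [z′₁,∞] ∖ {z_m} and ν_h(x) = rank[x,∞] + m − 1 − h otherwise; for 1 ≤ h ≤ m−2 define ν′_h : P⁺ → ℕ by ν′_h(x) = rank[x,∞] if x ∈ [z₁,∞] ∖ {z′_m} and ν′_h(x) = rank[x,∞] + m − 1 − h otherwise. Then the minimal elements of the poset (T(P), ≤) are exactly ν₁, …, ν_{m−1}, ν′₁, …, ν′_{m−2}, which are pairwise distinct; thus (T(P), ≤) has exactly 2m − 3 minimal elements. -/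
/-- The covering relations of a poset of type (a) with parameters `m ≥ 3`, `n, n' ≥ 0`. -/
def TypeACovers {Q : Type*} (m n n' : ℕ) (hm : 3 ≤ m)
    (z z' : Fin m → Q) (w : Fin (n + 1) → Q) (w' : Fin (n' + 1) → Q)
    (a b : Q) : Prop :=
  (∃ i : Fin n, a = w i.castSucc ∧ b = w i.succ) ∨
  (∃ i : Fin n', a = w' i.castSucc ∧ b = w' i.succ) ∨
  (a = w (Fin.last n) ∧ b = z ⟨0, by omega⟩) ∨
  (a = w (Fin.last n) ∧ b = z' ⟨0, by omega⟩) ∨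
  (∃ (i : ℕ) (h : i + 1 < m), a = z ⟨i, by omega⟩ ∧ b = z ⟨i + 1, h⟩) ∨
  (∃ (i : ℕ) (h : i + 1 < m), a = z' ⟨i, by omega⟩ ∧ b = z' ⟨i + 1, h⟩) ∨
  (a = z ⟨m - 1, by omega⟩ ∧ b = w' 0) ∨
  (a = z' ⟨m - 1, by omega⟩ ∧ b = w' 0) ∨
  (a = z' ⟨0, by omega⟩ ∧ b = z ⟨m - 1, by omega⟩) ∨
  (a = z ⟨0, by omega⟩ ∧ b = z' ⟨m - 1, by omega⟩)

/-- `ν ∈ T(P)` where `inf` plays the role of `∞` (the maximum of `P⁺`). -/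
def IsTPAt {Q : Type*} [PartialOrder Q] (inf : Q) (ν : Q → ℕ) : Prop :=
  ν inf = 0 ∧ StrictAnti ν

/-- `ν` is a minimal element of the poset `(T(P), ≤)`. -/
def IsMinTPAt {Q : Type*} [PartialOrder Q] (inf : Q) (ν : Q → ℕ) : Prop :=
  IsTPAt inf ν ∧ ∀ μ : Q → ℕ, IsTPAt inf μ → LeTP μ ν → μ = ν

/-- The function `ν_h`: `ν_h(x) = rank[x,∞]` for `x ∈ [z'₁,∞] ∖ {z_m}` and
`ν_h(x) = rank[x,∞] + m − 1 − h` otherwise.  Swapping the arguments `z` and `z'`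
yields the function `ν'_h`. -/
noncomputable def nuH {Q : Type*} [PartialOrder Q] [DecidableEq Q]
    [DecidableRel ((· ≤ ·) : Q → Q → Prop)]
    (m n' h : ℕ) (hm : 3 ≤ m) (z z' : Fin m → Q) (w' : Fin (n' + 1) → Q) : Q → ℕ :=
  fun q =>
    if z' ⟨0, by omega⟩ ≤ q ∧ q ≠ z ⟨m - 1, by omega⟩ then
      intervalRank q (w' (Fin.last n'))
    else
      intervalRank q (w' (Fin.last n')) + (m - 1 - h)

/-! `μ ≤ ν` in `T(P)` means that along each covering relation `μ` drops by at most as much as `ν`.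
Write `d = ν(z₁) - ν(z'ₘ)` and `d' = ν(z'₁) - ν(zₘ)` for the drops of `ν ∈ T(P)` along the two
covering relations that skip levels. Comparing drops gives `ν_{d'} ≤ ν` if `d' ≤ m - 1`,
symmetrically `ν'_d ≤ ν` if `d ≤ m - 1`, and if both are at least `m - 1`, then the rank function
`ν_{m-1} = ν'_{m-1}` lies below `ν`. So every `ν` lies above a listed function.

Conversely let `μ ≤ ν_h`. The set where `μ` and `ν_h` agree is an upper set. It contains `z'₁`,
where `ν_h` is the rank, hence `zₘ > z'₁`, and from there the agreement goes down the chain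
`w₀ < ⋯ < wₙ < z₁ < ⋯ < zₘ`, on which `ν_h` drops by one at each step. So `μ` and `ν_h` agree at
the minimum `w₀`, that is, everywhere. -/

section Chains

variable {Q : Type*} [PartialOrder Q]

theorem add_card_Ico_le_of_strictAnti {α : Type*} [LinearOrder α] [LocallyFiniteOrder α]
    {f : α → ℕ} (hf : StrictAnti f) {i j : α} (hij : i ≤ j) :
    f j + (Finset.Ico i j).card ≤ f i := by
  have hmaps : Set.MapsTo f (Finset.Ico i j) (Finset.Ioc (f j) (f i)) := by
    rw [Finset.coe_Ico, Finset.coe_Ioc]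
    exact fun k hk => ⟨hf hk.2, hf.antitone hk.1⟩
  have hcard := Finset.card_le_card_of_injOn f hmaps hf.injective.injOn
  have := hf.antitone hij
  rw [Nat.card_Ioc] at hcard
  omega

theorem add_length_le_of_strictAnti {f : Q → ℕ} (hf : StrictAnti f) {k : ℕ}
    {c : Fin (k + 1) → Q} (hc : StrictMono c) : f (c (Fin.last k)) + k ≤ f (c 0) := by
  simpa using add_card_Ico_le_of_strictAnti (hf.comp_strictMono hc) (Fin.zero_le (Fin.last k))

theorem intervalRank_le_sub_of_strictAnti {f : Q → ℕ} (hf : StrictAnti f) (x y : Q) :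
    intervalRank x y ≤ f x - f y := by
  refine csSup_le' ?_
  rintro k ⟨c, hc, rfl, rfl⟩
  exact Nat.le_sub_of_add_le' (add_length_le_of_strictAnti hf hc)

theorem exists_chain_of_forall_exists_lt {t : Q} {f : Q → ℕ} (ht : f t = 0)
    (hstep : ∀ x, x ≠ t → ∃ y, x < y ∧ f x = f y + 1) (x : Q) :
    ∃ c : Fin (f x + 1) → Q, StrictMono c ∧ c 0 = x ∧ c (Fin.last (f x)) = t := by
  induction hk : f x generalizing x with
  | zero =>
    have hxt : x = t := by
      by_contra hne
      obtain ⟨y, -, hy⟩ := hstep x hne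
      omega
    exact ⟨fun _ => x, Fin.strictMono_iff_lt_succ.2 finZeroElim, rfl, hxt⟩
  | succ k ih =>
    have hne : x ≠ t := by
      rintro rfl
      omega
    obtain ⟨y, hxy, hy⟩ := hstep x hne
    obtain ⟨c, hc, rfl, hct⟩ := ih y (by omega)
    exact ⟨Matrix.vecCons x c, strictMono_vecCons.2 ⟨hxy, hc⟩, rfl, hct⟩

theorem intervalRank_eq_of_strictAnti {t : Q} {f : Q → ℕ} (hf : StrictAnti f) (ht : f t = 0)
    (hstep : ∀ x, x ≠ t → ∃ y, x < y ∧ f x = f y + 1) (x : Q) :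
    intervalRank x t = f x := by
  refine IsGreatest.csSup_eq ⟨exists_chain_of_forall_exists_lt ht hstep x, ?_⟩
  rintro k ⟨c, hc, rfl, -⟩
  exact (Nat.le_add_left _ _).trans (add_length_le_of_strictAnti hf hc)

end Chains

namespace LeTP

variable {Q : Type*} [PartialOrder Q] {μ ν : Q → ℕ}

theorem of_covBy [LocallyFiniteOrder Q] {t : Q} (htop : ∀ q, q ≤ t) (ht : μ t ≤ ν t)
    (hcov : ∀ a b, a ⋖ b → μ a + ν b ≤ ν a + μ b) : LeTP μ ν := by
  have hanti : Antitone fun q => (ν q : ℤ) - μ q := by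
    refine (antitone_iff_forall_covBy _).2 fun a b hab => ?_
    have := hcov a b hab
    omega
  refine ⟨fun a => ?_, fun a b hab => hanti hab⟩
  have := hanti (htop a)
  simp only at this
  omega

theorem eq_of_le (hle : LeTP μ ν) {a b : Q} (hab : a ≤ b) (ha : μ a = ν a) : μ b = ν b := by
  have h₁ := hle.1 b
  have h₂ := hle.2 a b hab
  omega

end LeTP

/-- `Q` is a poset `P⁺` of type (a) whose elements are labelled by `z, z', w, w'`. The Lean indices
of `z` and `z'` start at `0`, so `z ⟨0, _⟩` and `z ⟨m - 1, _⟩` stand for `z₁` and `zₘ`. -/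
structure IsTypeA {Q : Type*} [PartialOrder Q] (m n n' : ℕ) (hm : 3 ≤ m)
    (z z' : Fin m → Q) (w : Fin (n + 1) → Q) (w' : Fin (n' + 1) → Q) : Prop where
  bijective : Function.Bijective (Sum.elim (Sum.elim z z') (Sum.elim w w') :
    (Fin m ⊕ Fin m) ⊕ (Fin (n + 1) ⊕ Fin (n' + 1)) → Q)
  covBy_iff : ∀ a b : Q, a ⋖ b ↔ TypeACovers m n n' hm z z' w w' a b
  bot_le : ∀ q : Q, w 0 ≤ q
  le_top : ∀ q : Q, q ≤ w' (Fin.last n')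

namespace IsTypeA

variable {Q : Type*} [PartialOrder Q] {m n n' : ℕ} {hm : 3 ≤ m}
  {z z' : Fin m → Q} {w : Fin (n + 1) → Q} {w' : Fin (n' + 1) → Q}

theorem symm (H : IsTypeA m n n' hm z z' w w') : IsTypeA m n n' hm z' z w w' where
  bijective := by
    convert H.bijective.comp ((Equiv.sumComm (Fin m) (Fin m)).sumCongr
      (Equiv.refl (Fin (n + 1) ⊕ Fin (n' + 1)))).bijective using 1
    ext ((i | i) | (i | i)) <;> rfl
  covBy_iff a b := by
    rw [H.covBy_iff, TypeACovers, TypeACovers, ← eq_iff_iff]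
    ac_rfl
  bot_le := H.bot_le
  le_top := H.le_top

/-- The order on a poset of type (a) is locally finite; this gives access to the criteria that
test monotonicity on covering relations. -/
@[reducible]
noncomputable def locallyFiniteOrder (H : IsTypeA m n n' hm z z' w w') : LocallyFiniteOrder Q := by
  classical
  let _ := Fintype.ofBijective _ H.bijective
  exact Fintype.toLocallyFiniteOrder

@[elab_as_elim]
theorem induction_on_label (H : IsTypeA m n n' hm z z' w w') {p : Q → Prop} (q : Q)
    (hz : ∀ i, p (z i)) (hz' : ∀ i, p (z' i)) (hw : ∀ i, p (w i)) (hw' : ∀ i, p (w' i)) :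
    p q := by
  obtain ⟨(i | i) | (i | i), rfl⟩ := H.bijective.surjective q
  exacts [hz i, hz' i, hw i, hw' i]

section Covers

variable (H : IsTypeA m n n' hm z z' w w')
include H

theorem covBy_w {i j : Fin (n + 1)} (hij : (i : ℕ) + 1 = j) : w i ⋖ w j :=
  (H.covBy_iff _ _).2 <| .inl
    ⟨⟨i, by omega⟩, rfl, congrArg w (Fin.ext hij.symm)⟩

theorem covBy_w' {i j : Fin (n' + 1)} (hij : (i : ℕ) + 1 = j) : w' i ⋖ w' j :=
  (H.covBy_iff _ _).2 <| .inr <| .inl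
    ⟨⟨i, by omega⟩, rfl, congrArg w' (Fin.ext hij.symm)⟩

theorem covBy_w_z : w (Fin.last n) ⋖ z ⟨0, by omega⟩ :=
  (H.covBy_iff _ _).2 <| .inr <| .inr <| .inl ⟨rfl, rfl⟩

theorem covBy_z {i j : Fin m} (hij : (i : ℕ) + 1 = j) : z i ⋖ z j :=
  (H.covBy_iff _ _).2 <| .inr <| .inr <| .inr <| .inr <| .inl
    ⟨i, by omega, rfl, congrArg z (Fin.ext hij.symm)⟩

theorem covBy_z_w' : z ⟨m - 1, by omega⟩ ⋖ w' 0 :=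
  (H.covBy_iff _ _).2 <| .inr <| .inr <| .inr <| .inr <| .inr <| .inr <| .inl ⟨rfl, rfl⟩

theorem covBy_z_z' : z ⟨0, by omega⟩ ⋖ z' ⟨m - 1, by omega⟩ :=
  (H.covBy_iff _ _).2 <| .inr <| .inr <| .inr <| .inr <| .inr <| .inr <| .inr <| .inr <| .inr
    ⟨rfl, rfl⟩

@[elab_as_elim]
theorem induction_on_covBy {p : ∀ a b : Q, a ⋖ b → Prop} {a b : Q} (hab : a ⋖ b)
    (hw : ∀ (i j : Fin (n + 1)) (hij : (i : ℕ) + 1 = j), p (w i) (w j) (H.covBy_w hij))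
    (hw' : ∀ (i j : Fin (n' + 1)) (hij : (i : ℕ) + 1 = j), p (w' i) (w' j) (H.covBy_w' hij))
    (hz : ∀ (i j : Fin m) (hij : (i : ℕ) + 1 = j), p (z i) (z j) (H.covBy_z hij))
    (hz' : ∀ (i j : Fin m) (hij : (i : ℕ) + 1 = j), p (z' i) (z' j) (H.symm.covBy_z hij))
    (hwz : p (w (Fin.last n)) (z ⟨0, by omega⟩) H.covBy_w_z)
    (hwz' : p (w (Fin.last n)) (z' ⟨0, by omega⟩) H.symm.covBy_w_z)
    (hzw' : p (z ⟨m - 1, by omega⟩) (w' 0) H.covBy_z_w')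
    (hz'w' : p (z' ⟨m - 1, by omega⟩) (w' 0) H.symm.covBy_z_w')
    (hzz' : p (z ⟨0, by omega⟩) (z' ⟨m - 1, by omega⟩) H.covBy_z_z')
    (hz'z : p (z' ⟨0, by omega⟩) (z ⟨m - 1, by omega⟩) H.symm.covBy_z_z') : p a b hab := by
  rcases (H.covBy_iff a b).1 hab with
    ⟨i, rfl, rfl⟩ | ⟨i, rfl, rfl⟩ | ⟨rfl, rfl⟩ | ⟨rfl, rfl⟩ | ⟨i, hi, rfl, rfl⟩ |
      ⟨i, hi, rfl, rfl⟩ | ⟨rfl, rfl⟩ | ⟨rfl, rfl⟩ | ⟨rfl, rfl⟩ | ⟨rfl, rfl⟩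
  exacts [hw _ _ rfl, hw' _ _ rfl, hwz, hwz', hz _ _ rfl, hz' _ _ rfl,
    hzw', hz'w', hz'z, hzz']

theorem strictMono_z : StrictMono z :=
  (strictMono_iff_forall_covBy z).2 fun _ _ hij =>
    (H.covBy_z (Nat.covBy_iff_add_one_eq.1 hij.coe_fin)).lt

theorem add_le_z {ν : Q → ℕ} (hν : StrictAnti ν) :
    ν (z ⟨m - 1, by omega⟩) + (m - 1) ≤ ν (z ⟨0, by omega⟩) := by
  have := add_card_Ico_le_of_strictAnti (hν.comp_strictMono H.strictMono_z)
    (i := ⟨0, by omega⟩) (j := ⟨m - 1, by omega⟩) (Nat.zero_le _)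
  simpa using this

theorem strictMono_w : StrictMono w :=
  (strictMono_iff_forall_covBy w).2 fun _ _ hij =>
    (H.covBy_w (Nat.covBy_iff_add_one_eq.1 hij.coe_fin)).lt

theorem strictMono_w' : StrictMono w' :=
  (strictMono_iff_forall_covBy w').2 fun _ _ hij =>
    (H.covBy_w' (Nat.covBy_iff_add_one_eq.1 hij.coe_fin)).lt

theorem z_ne_z' (i j : Fin m) : z i ≠ z' j :=
  H.bijective.injective.ne (a₁ := .inl (.inl i)) (a₂ := .inl (.inr j)) (by simp)

theorem not_z'_first_le_w (i : Fin (n + 1)) : ¬ z' ⟨0, by omega⟩ ≤ w i := fun hle =>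
  (H.symm.covBy_w_z.lt.trans_le hle).not_ge (H.strictMono_w.monotone (Fin.le_last i))

theorem z'_first_le_z' (i : Fin m) : z' ⟨0, by omega⟩ ≤ z' i :=
  H.symm.strictMono_z.monotone (Nat.zero_le _)

theorem z_last_lt_w' (i : Fin (n' + 1)) : z ⟨m - 1, by omega⟩ < w' i :=
  H.covBy_z_w'.lt.trans_le (H.strictMono_w'.monotone (Fin.zero_le i))

theorem eq_last_of_z'_first_le_z {i : Fin m} (hle : z' ⟨0, by omega⟩ ≤ z i) :
    i = ⟨m - 1, by omega⟩ := by
  by_contra hi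
  have hlt : i < ⟨m - 1, by omega⟩ := lt_of_le_of_ne (Nat.le_sub_one_of_lt i.isLt) hi
  exact H.symm.covBy_z_z'.2 (hle.lt_of_ne (H.z_ne_z' _ _).symm) (H.strictMono_z hlt)

end Covers

section Rank

/-- The function `rank[·,∞]`, given by its values on the labels; see `intervalRank_eq_level`. -/
noncomputable def level (H : IsTypeA m n n' hm z z' w w') : Q → ℕ :=
  fun q => Sum.elim
    (Sum.elim (fun i : Fin m => n' + (m - i)) (fun i : Fin m => n' + (m - i)))
    (Sum.elim (fun i : Fin (n + 1) => n' + m + 1 + (n - i)) (fun i : Fin (n' + 1) => n' - i))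
    ((Equiv.ofBijective _ H.bijective).symm q)

variable (H : IsTypeA m n n' hm z z' w w')

theorem level_z (i : Fin m) : H.level (z i) = n' + (m - i) :=
  congrArg (Sum.elim _ _) ((Equiv.ofBijective _ H.bijective).symm_apply_apply (.inl (.inl i)))

theorem level_z' (i : Fin m) : H.level (z' i) = n' + (m - i) :=
  congrArg (Sum.elim _ _) ((Equiv.ofBijective _ H.bijective).symm_apply_apply (.inl (.inr i)))

theorem level_w (i : Fin (n + 1)) : H.level (w i) = n' + m + 1 + (n - i) :=
  congrArg (Sum.elim _ _) ((Equiv.ofBijective _ H.bijective).symm_apply_apply (.inr (.inl i)))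

theorem level_w' (i : Fin (n' + 1)) : H.level (w' i) = n' - i :=
  congrArg (Sum.elim _ _) ((Equiv.ofBijective _ H.bijective).symm_apply_apply (.inr (.inr i)))

theorem strictAnti_level : StrictAnti H.level := by
  let _ := H.locallyFiniteOrder
  refine (strictAnti_iff_forall_covBy _).2 fun a b hab => ?_
  induction a, b, hab using H.induction_on_covBy with
  | hw i j hij | hw' i j hij | hz i j hij | hz' i j hij =>
    simp only [level_z, level_z', level_w, level_w']
    omega
  | _ =>
    simp only [level_z, level_z', level_w, level_w', Fin.val_last, Fin.val_zero]
    omega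

theorem exists_covBy_level_z (i : Fin m) : ∃ y, z i ⋖ y ∧ H.level (z i) = H.level y + 1 := by
  by_cases hi : (i : ℕ) + 1 < m
  · refine ⟨z ⟨i + 1, hi⟩, H.covBy_z rfl, ?_⟩
    simp only [level_z]
    omega
  · have hlast : i = ⟨m - 1, by omega⟩ := Fin.ext (by simp only; omega)
    rw [hlast]
    refine ⟨w' 0, H.covBy_z_w', ?_⟩
    simp only [level_z, level_w', Fin.val_zero]
    omega

theorem level_symm : H.symm.level = H.level := by
  funext q
  induction q using H.induction_on_label with
  | hz i => rw [H.level_z, H.symm.level_z']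
  | hz' i => rw [H.level_z', H.symm.level_z]
  | hw i => rw [H.level_w, H.symm.level_w]
  | hw' i => rw [H.level_w', H.symm.level_w']

theorem exists_covBy_level_eq {q : Q} (hq : q ≠ w' (Fin.last n')) :
    ∃ y, q ⋖ y ∧ H.level q = H.level y + 1 := by
  induction q using H.induction_on_label with
  | hz i => exact H.exists_covBy_level_z i
  | hz' i => exact H.level_symm ▸ H.symm.exists_covBy_level_z i
  | hw i =>
    cases i using Fin.lastCases with
    | last =>
      refine ⟨_, H.covBy_w_z, ?_⟩
      simp only [level_w, level_z, Fin.val_last]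
      omega
    | cast i =>
      refine ⟨w i.succ, H.covBy_w rfl, ?_⟩
      simp only [level_w, Fin.val_castSucc, Fin.val_succ]
      omega
  | hw' i =>
    cases i using Fin.lastCases with
    | last => exact absurd rfl hq
    | cast i =>
      refine ⟨w' i.succ, H.covBy_w' rfl, ?_⟩
      simp only [level_w', Fin.val_castSucc, Fin.val_succ]
      omega

theorem intervalRank_eq_level (q : Q) : intervalRank q (w' (Fin.last n')) = H.level q := by
  refine intervalRank_eq_of_strictAnti H.strictAnti_level (by simp [level_w']) (fun x hx => ?_) q
  obtain ⟨y, hxy, hy⟩ := H.exists_covBy_level_eq hx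
  exact ⟨y, hxy.lt, hy⟩

end Rank

section Nu

variable [DecidableEq Q] [DecidableRel ((· ≤ ·) : Q → Q → Prop)]
  (H : IsTypeA m n n' hm z z' w w') (h : ℕ)
include H

theorem nuH_z (i : Fin m) : nuH m n' h hm z z' w' (z i) = n' + (m - i) + (m - 1 - h) := by
  rw [nuH, if_neg, H.intervalRank_eq_level, H.level_z]
  exact fun hi => hi.2 (congrArg z (H.eq_last_of_z'_first_le_z hi.1))

theorem nuH_z' (i : Fin m) : nuH m n' h hm z z' w' (z' i) = n' + (m - i) := by
  rw [nuH, if_pos ⟨H.z'_first_le_z' i, (H.z_ne_z' _ _).symm⟩, H.intervalRank_eq_level, H.level_z']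

theorem nuH_w (i : Fin (n + 1)) :
    nuH m n' h hm z z' w' (w i) = n' + m + 1 + (n - i) + (m - 1 - h) := by
  rw [nuH, if_neg fun hi => H.not_z'_first_le_w i hi.1, H.intervalRank_eq_level, H.level_w]

theorem nuH_w' (i : Fin (n' + 1)) : nuH m n' h hm z z' w' (w' i) = n' - i := by
  rw [nuH, if_pos ⟨(H.symm.z_last_lt_w' i).le.trans' (H.z'_first_le_z' _), (H.z_last_lt_w' i).ne'⟩,
    H.intervalRank_eq_level, H.level_w']

variable {h}

theorem isTPAt_nuH (hpos : 1 ≤ h) : IsTPAt (w' (Fin.last n')) (nuH m n' h hm z z' w') := by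
  refine ⟨by simp [H.nuH_w'], ?_⟩
  let _ := H.locallyFiniteOrder
  refine (strictAnti_iff_forall_covBy _).2 fun a b hab => ?_
  induction a, b, hab using H.induction_on_covBy with
  | hw i j hij | hw' i j hij | hz i j hij | hz' i j hij =>
    simp only [H.nuH_z, H.nuH_z', H.nuH_w, H.nuH_w']
    omega
  | _ =>
    simp only [H.nuH_z, H.nuH_z', H.nuH_w, H.nuH_w', Fin.val_last, Fin.val_zero]
    omega

theorem isMinTPAt_nuH (hpos : 1 ≤ h) :
    IsMinTPAt (w' (Fin.last n')) (nuH m n' h hm z z' w') := by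
  refine ⟨H.isTPAt_nuH hpos, fun μ hμ hμν => ?_⟩
  have eq_z' : μ (z' ⟨0, by omega⟩) = nuH m n' h hm z z' w' (z' ⟨0, by omega⟩) := by
    refine (hμν.1 _).antisymm ?_
    rw [H.nuH_z', ← H.level_z', ← H.intervalRank_eq_level]
    exact (intervalRank_le_sub_of_strictAnti hμ.2 _ _).trans (Nat.sub_le _ _)
  have eq_z : μ (z ⟨m - 1, by omega⟩) = nuH m n' h hm z z' w' (z ⟨m - 1, by omega⟩) :=
    hμν.eq_of_le H.symm.covBy_z_z'.le eq_z'
  have eq_w : μ (w 0) = nuH m n' h hm z z' w' (w 0) := by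
    refine (hμν.1 _).antisymm ?_
    have hz := H.add_le_z hμ.2
    have hwz := hμ.2 H.covBy_w_z.lt
    have hw := add_length_le_of_strictAnti hμ.2 H.strictMono_w
    rw [eq_z, H.nuH_z] at hz
    rw [H.nuH_w, Fin.val_zero]
    simp only at hz
    omega
  exact funext fun q => hμν.eq_of_le (H.bot_le q) eq_w

/-- The four covering relations below are those along which `ν_h` may drop by more than one. -/
theorem leTP_nuH (hle : h ≤ m - 1) {ν : Q → ℕ} (hν : IsTPAt (w' (Fin.last n')) ν)
    (hwz' : ν (z' ⟨0, by omega⟩) + (m - h) ≤ ν (w (Fin.last n)))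
    (hzw' : ν (w' 0) + (m - h) ≤ ν (z ⟨m - 1, by omega⟩))
    (hz'z : ν (z ⟨m - 1, by omega⟩) + h ≤ ν (z' ⟨0, by omega⟩))
    (hzz' : ν (z' ⟨m - 1, by omega⟩) + (2 * (m - 1) - h) ≤ ν (z ⟨0, by omega⟩)) :
    LeTP (nuH m n' h hm z z' w') ν := by
  let _ := H.locallyFiniteOrder
  refine LeTP.of_covBy H.le_top (by simp [H.nuH_w']) fun a b hab => ?_
  have hlt := hν.2 hab.lt
  induction a, b, hab using H.induction_on_covBy with
  | hw i j hij | hw' i j hij | hz i j hij | hz' i j hij =>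
    simp only [H.nuH_z, H.nuH_z', H.nuH_w, H.nuH_w']
    omega
  | _ =>
    simp only [H.nuH_z, H.nuH_z', H.nuH_w, H.nuH_w', Fin.val_last, Fin.val_zero]
    omega

theorem leTP_nuH_of_drop_eq (hle : h ≤ m - 1) {ν : Q → ℕ} (hν : IsTPAt (w' (Fin.last n')) ν)
    (hdrop : ν (z' ⟨0, by omega⟩) = ν (z ⟨m - 1, by omega⟩) + h) :
    LeTP (nuH m n' h hm z z' w') ν := by
  have hz := H.add_le_z hν.2
  have hz' := H.symm.add_le_z hν.2
  have hwz := hν.2 H.covBy_w_z.lt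
  have hz'w' := hν.2 H.symm.covBy_z_w'.lt
  exact H.leTP_nuH hle hν (by omega) (by omega) (by omega) (by omega)

theorem leTP_nuH_of_le_drops {ν : Q → ℕ} (hν : IsTPAt (w' (Fin.last n')) ν)
    (hz'z : ν (z ⟨m - 1, by omega⟩) + (m - 1) ≤ ν (z' ⟨0, by omega⟩))
    (hzz' : ν (z' ⟨m - 1, by omega⟩) + (m - 1) ≤ ν (z ⟨0, by omega⟩)) :
    LeTP (nuH m n' (m - 1) hm z z' w') ν := by
  have hwz' := hν.2 H.symm.covBy_w_z.lt
  have hzw' := hν.2 H.covBy_z_w'.lt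
  exact H.leTP_nuH le_rfl hν (by omega) (by omega) hz'z (by omega)

theorem exists_leTP_nuH {ν : Q → ℕ} (hν : IsTPAt (w' (Fin.last n')) ν) :
    (∃ h, 1 ≤ h ∧ h ≤ m - 1 ∧ LeTP (nuH m n' h hm z z' w') ν) ∨
      ∃ h, 1 ≤ h ∧ h ≤ m - 2 ∧ LeTP (nuH m n' h hm z' z w') ν := by
  obtain ⟨d', hd'⟩ := Nat.exists_eq_add_of_lt (hν.2 H.symm.covBy_z_z'.lt)
  obtain ⟨d, hd⟩ := Nat.exists_eq_add_of_lt (hν.2 H.covBy_z_z'.lt)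
  by_cases hd'm : d' + 1 ≤ m - 1
  · exact .inl ⟨d' + 1, by omega, hd'm, H.leTP_nuH_of_drop_eq hd'm hν hd'⟩
  by_cases hdm : d + 1 ≤ m - 2
  · exact .inr ⟨d + 1, by omega, hdm, H.symm.leTP_nuH_of_drop_eq (by omega) hν hd⟩
  exact .inl ⟨m - 1, by omega, le_rfl, H.leTP_nuH_of_le_drops hν (by omega) (by omega)⟩

theorem exists_eq_nuH_of_isMinTPAt {ν : Q → ℕ} (hν : IsMinTPAt (w' (Fin.last n')) ν) :
    (∃ h, 1 ≤ h ∧ h ≤ m - 1 ∧ ν = nuH m n' h hm z z' w') ∨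
      ∃ h, 1 ≤ h ∧ h ≤ m - 2 ∧ ν = nuH m n' h hm z' z w' := by
  obtain ⟨h, hpos, hle, hhν⟩ | ⟨h, hpos, hle, hhν⟩ := H.exists_leTP_nuH hν.1
  · exact .inl ⟨h, hpos, hle, (hν.2 _ (H.isTPAt_nuH hpos) hhν).symm⟩
  · exact .inr ⟨h, hpos, hle, (hν.2 _ (H.symm.isTPAt_nuH hpos) hhν).symm⟩

theorem injOn_nuH : Set.InjOn (fun h => nuH m n' h hm z z' w') (Set.Iic (m - 1)) := by
  intro h hh h' hh' heq
  have := congrFun heq (z ⟨0, by omega⟩)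
  simp only [H.nuH_z, Set.mem_Iic] at this hh hh'
  omega

theorem nuH_ne_nuH_swap {h' : ℕ} (hlt : h' < m - 1) :
    nuH m n' h hm z z' w' ≠ nuH m n' h' hm z' z w' := by
  intro heq
  have := congrFun heq (z' ⟨0, by omega⟩)
  rw [H.nuH_z', H.symm.nuH_z] at this
  omega

theorem setOf_isMinTPAt_eq : {ν | IsMinTPAt (w' (Fin.last n')) ν} =
    (fun h => nuH m n' h hm z z' w') '' Set.Icc 1 (m - 1) ∪
      (fun h => nuH m n' h hm z' z w') '' Set.Icc 1 (m - 2) := by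
  ext ν
  constructor
  · intro hν
    obtain ⟨h, hpos, hle, rfl⟩ | ⟨h, hpos, hle, rfl⟩ := H.exists_eq_nuH_of_isMinTPAt hν
    · exact .inl ⟨h, ⟨hpos, hle⟩, rfl⟩
    · exact .inr ⟨h, ⟨hpos, hle⟩, rfl⟩
  · rintro (⟨h, ⟨hpos, -⟩, rfl⟩ | ⟨h, ⟨hpos, -⟩, rfl⟩)
    · exact H.isMinTPAt_nuH hpos
    · exact H.symm.isMinTPAt_nuH hpos

end Nu

theorem ncard_setOf_isMinTPAt (H : IsTypeA m n n' hm z z' w w') :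
    {ν | IsMinTPAt (w' (Fin.last n')) ν}.ncard = 2 * m - 3 := by
  classical
  have hdisj : Disjoint ((fun h => nuH m n' h hm z z' w') '' Set.Icc 1 (m - 1))
      ((fun h => nuH m n' h hm z' z w') '' Set.Icc 1 (m - 2)) := by
    rw [Set.disjoint_left]
    rintro _ ⟨h, -, rfl⟩ ⟨h', hh', heq⟩
    exact H.nuH_ne_nuH_swap (by grind) heq.symm
  rw [H.setOf_isMinTPAt_eq, Set.ncard_union_eq hdisj ((Set.finite_Icc _ _).image _)
    ((Set.finite_Icc _ _).image _),
    (H.injOn_nuH.mono fun h hh => hh.2).ncard_image,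
    (H.symm.injOn_nuH.mono fun h hh => hh.2.trans (by omega)).ncard_image]
  simp only [← Finset.coe_Icc, Set.ncard_coe_finset, Nat.card_Icc]
  omega

end IsTypeA

/-- for a poset of type (a), the minimal elements of `(T(P), ≤)` are
exactly the pairwise distinct functions `ν₁, …, ν_{m−1}, ν'₁, …, ν'_{m−2}`; in
particular there are exactly `2m − 3` of them. -/
theorem typeA_minimal_elements
    {Q : Type*} [Fintype Q] [PartialOrder Q] [DecidableEq Q]
    [DecidableRel ((· ≤ ·) : Q → Q → Prop)]
    (m n n' : ℕ) (hm : 3 ≤ m)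
    (z z' : Fin m → Q) (w : Fin (n + 1) → Q) (w' : Fin (n' + 1) → Q)
    (hbij : Function.Bijective
      (Sum.elim (Sum.elim z z') (Sum.elim w w') :
        (Fin m ⊕ Fin m) ⊕ (Fin (n + 1) ⊕ Fin (n' + 1)) → Q))
    (hcov : ∀ a b : Q, a ⋖ b ↔ TypeACovers m n n' hm z z' w w' a b)
    (hbot : ∀ q : Q, w 0 ≤ q)
    (htop : ∀ q : Q, q ≤ w' (Fin.last n')) :
    (∀ h : ℕ, 1 ≤ h → h ≤ m - 1 →
      IsMinTPAt (w' (Fin.last n')) (nuH m n' h hm z z' w')) ∧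
    (∀ h : ℕ, 1 ≤ h → h ≤ m - 2 →
      IsMinTPAt (w' (Fin.last n')) (nuH m n' h hm z' z w')) ∧
    (∀ h h' : ℕ, 1 ≤ h → h ≤ m - 1 → 1 ≤ h' → h' ≤ m - 1 →
      nuH m n' h hm z z' w' = nuH m n' h' hm z z' w' → h = h') ∧
    (∀ h h' : ℕ, 1 ≤ h → h ≤ m - 2 → 1 ≤ h' → h' ≤ m - 2 →
      nuH m n' h hm z' z w' = nuH m n' h' hm z' z w' → h = h') ∧
    (∀ h h' : ℕ, 1 ≤ h → h ≤ m - 1 → 1 ≤ h' → h' ≤ m - 2 →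
      nuH m n' h hm z z' w' ≠ nuH m n' h' hm z' z w') ∧
    (∀ ν : Q → ℕ, IsMinTPAt (w' (Fin.last n')) ν →
      (∃ h : ℕ, 1 ≤ h ∧ h ≤ m - 1 ∧ ν = nuH m n' h hm z z' w') ∨
      (∃ h : ℕ, 1 ≤ h ∧ h ≤ m - 2 ∧ ν = nuH m n' h hm z' z w')) ∧
    {ν : Q → ℕ | IsMinTPAt (w' (Fin.last n')) ν}.ncard = 2 * m - 3 := by
  have H : IsTypeA m n n' hm z z' w w' := ⟨hbij, hcov, hbot, htop⟩
  exact ⟨fun h hpos _ => H.isMinTPAt_nuH hpos,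
    fun h hpos _ => H.symm.isMinTPAt_nuH hpos,
    fun h h' _ hle _ hle' heq => H.injOn_nuH hle hle' heq,
    fun h h' _ hle _ hle' heq => H.symm.injOn_nuH (by grind) (by grind) heq,
    fun h h' _ _ _ hle' => H.nuH_ne_nuH_swap (by omega),
    fun ν hν => H.exists_eq_nuH_of_isMinTPAt hν,
    H.ncard_setOf_isMinTPAt⟩
end
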